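/- arXiv:2007.15725 — 2 statements merged into one kernel-verified Lean document; each statement's English description precedes it below -/
import Mathlib

section
/- Assume S is a proper family and Δ^{l,u} = Δ^{0,n}. Then conv(X^{l,u}) = conv(X^{0,u}) ∩ conv(X^{l,n}). -/
open Finset

noncomputable section

def Xset (n m l u : ℕ) (S : Fin m → Finset (Fin n)) : Set ((Fin n → ℝ) × (Fin m → ℝ)) :=
  {zd | (∀ j, zd.1 j = 0 ∨ zd.1 j = 1) ∧ (∀ i, zd.2 i = 0 ∨ zd.2 i = 1) ∧
        (∀ i, zd.2 i = ∏ j ∈ S i, (1 - zd.1 j)) ∧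
        (l : ℝ) ≤ ∑ j, zd.1 j ∧ ∑ j, zd.1 j ≤ (u : ℝ)}

def Dset (n m l u : ℕ) (S : Fin m → Finset (Fin n)) : Set (Fin m → ℝ) :=
  Prod.snd '' Xset n m l u S

def Xfiber (n m l u : ℕ) (S : Fin m → Finset (Fin n)) (δ : Fin m → ℝ) :
    Set (Fin n → ℝ) :=
  {z | (z, δ) ∈ Xset n m l u S}

/-- The family is closed under nonempty intersection. -/
def ClosedInter (n m : ℕ) (S : Fin m → Finset (Fin n)) : Prop :=
  ∀ i j : Fin m, (S i ∩ S j).Nonempty → ∃ k, S i ∩ S j = S k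

/-- The family is proper. -/
def ProperFam (n m l u : ℕ) (S : Fin m → Finset (Fin n)) : Prop :=
  ClosedInter n m S ∧
  ∃ D : Finset (Fin m → ℝ), (D : Set (Fin m → ℝ)) = Dset n m l u S ∧ D.card = m + 1 ∧
    AffineIndependent ℝ (Subtype.val : {x : Fin m → ℝ // x ∈ D} → (Fin m → ℝ))

/-- `f x ≤ c` is valid and defines a facet of `conv P`. -/
def IsFacet {E : Type*} [AddCommGroup E] [Module ℝ E] (P : Set E) (f : E → ℝ) (c : ℝ) :
    Prop :=
  (∀ x ∈ P, f x ≤ c) ∧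
  Module.finrank ℝ (affineSpan ℝ {x ∈ convexHull ℝ P | f x = c}).direction + 1 =
    Module.finrank ℝ (affineSpan ℝ P).direction

def SS (n m : ℕ) (S : Fin m → Finset (Fin n)) : ℕ → Finset (Fin n) :=
  fun k => if h : 1 ≤ k ∧ k ≤ m then S ⟨k - 1, by omega⟩ else if k = 0 then ∅ else Finset.univ

def dd (m : ℕ) (δ : Fin m → ℝ) : ℕ → ℝ :=
  fun k => if h : 1 ≤ k ∧ k ≤ m then δ ⟨k - 1, by omega⟩ else if k = 0 then 1 else 0

def mixLeLHS (n m u : ℕ) (S : Fin m → Finset (Fin n)) (p : ℕ) (S' : Finset (Fin n))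
    (zd : (Fin n → ℝ) × (Fin m → ℝ)) : ℝ :=
  ∑ j ∈ S', zd.1 j + ((u : ℝ) - ((S' \ SS n m S p).card : ℝ)) * dd m zd.2 p
    + ∑ i ∈ Finset.Icc (p + 1) m,
        (((S' \ SS n m S (i - 1)).card : ℝ) - ((S' \ SS n m S i).card : ℝ)) * dd m zd.2 i

def MixLe (n m u : ℕ) (S : Fin m → Finset (Fin n)) (p : ℕ) (S' : Finset (Fin n))
    (zd : (Fin n → ℝ) × (Fin m → ℝ)) : Prop :=
  mixLeLHS n m u S p S' zd ≤ (u : ℝ)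

def mixGeLHS (n m l : ℕ) (S : Fin m → Finset (Fin n)) (p : ℕ) (S' : Finset (Fin n))
    (zd : (Fin n → ℝ) × (Fin m → ℝ)) : ℝ :=
  (((S' ∪ SS n m S p).card : ℝ) - (n : ℝ) + (l : ℝ)) * dd m zd.2 p
    + ∑ i ∈ Finset.Icc (p + 1) m,
        (((S' ∪ SS n m S i).card : ℝ) - ((S' ∪ SS n m S (i - 1)).card : ℝ)) * dd m zd.2 i
    - ∑ j ∈ S', zd.1 j

def MixGe (n m l : ℕ) (S : Fin m → Finset (Fin n)) (p : ℕ) (S' : Finset (Fin n))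
    (zd : (Fin n → ℝ) × (Fin m → ℝ)) : Prop :=
  mixGeLHS n m l S p S' zd ≤ 0

def NestedLin (n m l u : ℕ) (S : Fin m → Finset (Fin n))
    (zd : (Fin n → ℝ) × (Fin m → ℝ)) : Prop :=
  ((l : ℝ) ≤ ∑ j, zd.1 j) ∧ (∑ j, zd.1 j ≤ (u : ℝ)) ∧
  (∀ i : Fin m, ∀ j ∈ S i, zd.1 j + zd.2 i ≤ 1) ∧
  (1 ≤ dd m zd.2 1 + ∑ j ∈ SS n m S 1, zd.1 j) ∧
  (0 ≤ dd m zd.2 m) ∧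
  (∀ j, 0 ≤ zd.1 j) ∧
  (∀ j, j ∉ SS n m S m → zd.1 j ≤ 1) ∧
  (∀ i : ℕ, 1 ≤ i → i + 1 ≤ m → dd m zd.2 (i + 1) ≤ dd m zd.2 i) ∧
  (∀ i : ℕ, 1 ≤ i → i + 1 ≤ m →
    dd m zd.2 i - dd m zd.2 (i + 1) ≤ ∑ j ∈ SS n m S (i + 1) \ SS n m S i, zd.1 j)

def FollowsPattern (n : ℕ) (α α' : Fin n → ℝ) : Prop :=
  (∀ j, (0 ≤ α j → 0 ≤ α' j) ∧ (α j ≤ 0 → α' j ≤ 0)) ∧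
  (∀ j₁ j₂ : Fin n, α j₂ ≤ α j₁ → α' j₂ ≤ α' j₁)

def IsFacetSet {E : Type*} [AddCommGroup E] [Module ℝ E] (P : Set E) (F : Set E) : Prop :=
  ∃ (f : E →ₗ[ℝ] ℝ) (c : ℝ), (∀ x ∈ P, f x ≤ c) ∧
    F = {x ∈ convexHull ℝ P | f x = c} ∧
    Module.finrank ℝ (affineSpan ℝ F).direction + 1 =
      Module.finrank ℝ (affineSpan ℝ P).direction

open Topology Filter in
lemma ev_aux (t s : ℝ) (h : s = 0 ∨ ¬ ∃ N : ℤ, (N:ℝ) = t) :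
    ∀ᶠ ε in 𝓝 (0:ℝ), ∀ N : ℤ, ((N:ℝ) ≤ t → (N:ℝ) ≤ t + ε * s) ∧ (t ≤ N → t + ε * s ≤ N) := by
  rcases h with rfl | h
  · simp
  · have hc : Tendsto (fun ε : ℝ => t + ε * s) (𝓝 0) (𝓝 t) := by
      have : Continuous (fun ε : ℝ => t + ε * s) := by fun_prop
      simpa using this.tendsto 0
    have h1 : (⌊t⌋ : ℝ) < t := lt_of_le_of_ne (Int.floor_le t) fun h' => h ⟨_, h'⟩
    have h2 : t < (⌈t⌉ : ℝ) := lt_of_le_of_ne (Int.le_ceil t) fun h' => h ⟨_, h'.symm⟩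
    filter_upwards [hc (Ioo_mem_nhds h1 h2)] with ε hε N
    constructor
    · intro hN
      have : (N:ℝ) ≤ ⌊t⌋ := by exact_mod_cast Int.le_floor.2 hN
      exact this.trans hε.1.le
    · intro hN
      have : (⌈t⌉:ℝ) ≤ N := by exact_mod_cast Int.ceil_le.2 hN
      exact hε.2.le.trans this

lemma nonint_aux {J : Type*} [DecidableEq J] (x : J → ℝ) (A : Finset J) (j : J) (hj : j ∈ A)
    (hx : ¬ ∃ N : ℤ, (N:ℝ) = x j) (hu : ∀ j' ∈ A, j' ≠ j → x j' = 0 ∨ x j' = 1) :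
    ¬ ∃ N : ℤ, (N:ℝ) = ∑ i ∈ A, x i := by
  rintro ⟨N, hN⟩
  have : ∃ N' : ℤ, (N':ℝ) = ∑ i ∈ A.erase j, x i := by
    refine ⟨∑ i ∈ A.erase j, ⌊x i⌋, ?_⟩
    push_cast
    refine Finset.sum_congr rfl fun i hi => ?_
    rw [Finset.mem_erase] at hi
    rcases hu i hi.2 hi.1 with h | h <;> simp [h]
  obtain ⟨N', hN'⟩ := this
  refine hx ⟨N - N', ?_⟩
  push_cast
  rw [hN, hN', ← Finset.add_sum_erase A x hj]
  ring

def PP {J R : Type*} [Fintype J] [DecidableEq R] (T : Set J) (c : J → R) (M : Set R) (l u : ℕ) :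
    Set (J → ℝ) :=
  {x | (∀ j, 0 ≤ x j ∧ x j ≤ 1) ∧ (∀ j ∈ T, x j = 0) ∧ (∀ r ∈ M, 1 ≤ ∑ j with c j = r, x j) ∧
    (l:ℝ) ≤ ∑ j, x j ∧ ∑ j, x j ≤ (u:ℝ)}

open Topology Filter in
lemma pert_aux {J R : Type*} [Fintype J] [Fintype R] [DecidableEq R] (T : Set J) (c : J → R)
    (M : Set R) (l u : ℕ) (x v : J → ℝ) (hx : x ∈ PP T c M l u)
    (h1 : ∀ j, v j = 0 ∨ ¬ ∃ N : ℤ, (N:ℝ) = x j)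
    (h2 : ∀ r, ∑ j with c j = r, v j = 0 ∨ ¬ ∃ N : ℤ, (N:ℝ) = ∑ j with c j = r, x j)
    (h3 : ∑ j, v j = 0 ∨ ¬ ∃ N : ℤ, (N:ℝ) = ∑ j, x j) :
    ∀ᶠ ε in 𝓝 (0:ℝ), x + ε • v ∈ PP T c M l u := by
  obtain ⟨a1, a2, a3, a4, a5⟩ := hx
  filter_upwards [eventually_all.2 fun j => ev_aux _ _ (h1 j),
    eventually_all.2 fun r => ev_aux _ _ (h2 r), ev_aux _ _ h3] with ε e1 e2 e3
  refine ⟨fun j => ⟨?_, ?_⟩, fun j hj => ?_, fun r hr => ?_, ?_, ?_⟩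
  · simpa using (e1 j 0).1 (by simpa using (a1 j).1)
  · simpa using (e1 j 1).2 (by simpa using (a1 j).2)
  · have h := a2 j hj
    rcases h1 j with h' | h'
    · simp [h, h']
    · exact absurd ⟨0, by simp [h]⟩ h'
  · have := (e2 r 1).1 (by simpa using a3 r hr)
    simpa [Finset.sum_add_distrib, ← Finset.mul_sum] using this
  · have := (e3 l).1 (by simpa using a4)
    simpa [Finset.sum_add_distrib, ← Finset.mul_sum] using this
  · have := (e3 u).2 (by simpa using a5)
    simpa [Finset.sum_add_distrib, ← Finset.mul_sum] using this

open Topology Filter in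
lemma ext_aux {J R : Type*} [Fintype J] [Fintype R] [DecidableEq R] [DecidableEq J]
    (T : Set J) (c : J → R)
    (M : Set R) (l u : ℕ) (x : J → ℝ) (hx : x ∈ (PP T c M l u).extremePoints ℝ) :
    ∀ j, x j = 0 ∨ x j = 1 := by
  have key : ∀ v : J → ℝ, (∀ j, v j = 0 ∨ ¬ ∃ N : ℤ, (N:ℝ) = x j) →
      (∀ r, ∑ j with c j = r, v j = 0 ∨ ¬ ∃ N : ℤ, (N:ℝ) = ∑ j with c j = r, x j) →
      (∑ j, v j = 0 ∨ ¬ ∃ N : ℤ, (N:ℝ) = ∑ j, x j) → v = 0 := by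
    intro v h1 h2 h3
    have e := pert_aux T c M l u x v hx.1 h1 h2 h3
    have e' : ∀ᶠ ε in 𝓝 (0:ℝ), x + (-ε) • v ∈ PP T c M l u := by
      have : Tendsto (fun ε : ℝ => -ε) (𝓝 0) (𝓝 0) := by
        simpa using (continuous_neg (G := ℝ)).tendsto 0
      exact this.eventually e
    have e2 : ∀ᶠ ε in 𝓝[>] (0:ℝ), x + ε • v ∈ PP T c M l u ∧ x + (-ε) • v ∈ PP T c M l u :=
      (e.and e').filter_mono nhdsWithin_le_nhds
    obtain ⟨ε, ⟨m1, m2⟩, hε⟩ := (e2.and self_mem_nhdsWithin).exists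
    have hε : 0 < ε := hε
    have := hx.2 m1 m2 ⟨1/2, 1/2, by norm_num, by norm_num, by norm_num, by
      ext j; simp; ring⟩
    have h0 : ε • v = 0 := by simpa using this
    exact (smul_eq_zero.1 h0).resolve_left hε.ne'
  have hni : ∀ j, ¬ (x j = 0 ∨ x j = 1) → ¬ ∃ N : ℤ, (N:ℝ) = x j := by
    rintro j hj ⟨N, hN⟩
    have h := hx.1.1 j
    rw [← hN] at h hj
    have h1 : 0 ≤ N := by exact_mod_cast h.1
    have h2 : N ≤ 1 := by exact_mod_cast h.2
    apply hj
    obtain rfl | rfl : N = 0 ∨ N = 1 := by omega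
    · simp
    · simp
  have sumsingle : ∀ (A : Finset J) (j : J), ∑ i ∈ A, (Pi.single j (1:ℝ) : J → ℝ) i =
      if j ∈ A then 1 else 0 := by
    intro A j
    simp [Pi.single_apply]
  by_contra hcon
  push Not at hcon
  obtain ⟨j, hj⟩ := hcon
  rw [← not_or] at hj
  have hjn := hni j hj
  by_cases hA : ∃ j₁ j₂, j₁ ≠ j₂ ∧ c j₁ = c j₂ ∧ ¬ (x j₁ = 0 ∨ x j₁ = 1) ∧ ¬ (x j₂ = 0 ∨ x j₂ = 1)
  · obtain ⟨j₁, j₂, hne, hcc, f1, f2⟩ := hA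
    have := key (Pi.single j₁ 1 - Pi.single j₂ 1) ?_ ?_ ?_
    · have := congrFun this j₁
      simp [hne] at this
    · intro i
      by_cases i1 : i = j₁
      · right; rw [i1]; exact hni _ f1
      by_cases i2 : i = j₂
      · right; rw [i2]; exact hni _ f2
      left; simp [i1, i2]
    · intro r
      left
      simp only [Pi.sub_apply, Finset.sum_sub_distrib, sumsingle]
      simp [hcc]
    · left
      simp only [Pi.sub_apply, Finset.sum_sub_distrib, sumsingle]
      simp
  · push Not at hA
    have hcl : ∀ i r, ¬ (x i = 0 ∨ x i = 1) → c i = r →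
        ¬ ∃ N : ℤ, (N:ℝ) = ∑ j with c j = r, x j := by
      intro i r hi hr
      apply nonint_aux x _ i (by simp [hr]) (hni i hi)
      intro j' hj' hne
      by_contra hcon
      have := hA i j' hne.symm (by simp at hj'; rw [hr, hj'])
      tauto
    by_cases hB : ∃ j', j' ≠ j ∧ ¬ (x j' = 0 ∨ x j' = 1)
    · obtain ⟨j', hne, hj'⟩ := hB
      have := key (Pi.single j 1 - Pi.single j' 1) ?_ ?_ ?_
      · have := congrFun this j
        simp [hne.symm] at this
      · intro i
        by_cases i1 : i = j
        · right; rw [i1]; exact hni _ hj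
        by_cases i2 : i = j'
        · right; rw [i2]; exact hni _ hj'
        left; simp [i1, i2]
      · intro r
        by_cases i1 : c j = r
        · right; exact hcl j r hj i1
        by_cases i2 : c j' = r
        · right; exact hcl j' r hj' i2
        left
        simp only [Pi.sub_apply, Finset.sum_sub_distrib, sumsingle]
        simp [i1, i2]
      · left
        simp only [Pi.sub_apply, Finset.sum_sub_distrib, sumsingle]
        simp
    · push Not at hB
      have := key (Pi.single j 1) ?_ ?_ ?_
      · have := congrFun this j
        simp at this
      · intro i
        by_cases i1 : i = j
        · right; rw [i1]; exact hni _ hj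
        left; simp [i1]
      · intro r
        by_cases i1 : c j = r
        · right; exact hcl j r hj i1
        left
        rw [sumsingle]
        simp [i1]
      · right
        apply nonint_aux x _ j (by simp) hjn
        intro j' _ hne
        exact hB j' hne

lemma PP_sub {J R : Type*} [Fintype J] [Fintype R] [DecidableEq R] [DecidableEq J]
    (T : Set J) (c : J → R) (M : Set R) (l u : ℕ) :
    PP T c M l u ⊆ convexHull ℝ {x | x ∈ PP T c M l u ∧ ∀ j, x j = 0 ∨ x j = 1} := by
  have hconv : Convex ℝ (PP T c M l u) := by
    rintro x ⟨a1, a2, a3, a4, a5⟩ y ⟨b1, b2, b3, b4, b5⟩ s t hs ht hst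
    refine ⟨fun j => ⟨?_, ?_⟩, fun j hj => ?_, fun r hr => ?_, ?_, ?_⟩ <;>
      simp only [Pi.add_apply, Pi.smul_apply, smul_eq_mul, Finset.sum_add_distrib,
        ← Finset.mul_sum]
    · have := a1 j; have := b1 j
      nlinarith
    · have := a1 j; have := b1 j
      nlinarith
    · simp [a2 j hj, b2 j hj]
    · have := a3 r hr; have := b3 r hr
      nlinarith
    · obtain rfl : s = 1 - t := by linarith
      nlinarith
    · obtain rfl : s = 1 - t := by linarith
      nlinarith
  have hcomp : IsCompact (PP T c M l u) := by
    refine (isCompact_univ_pi fun _ => isCompact_Icc (a := (0:ℝ)) (b := 1)).of_isClosed_subset ?_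
      (fun x hx j _ => hx.1 j)
    simp only [PP, Set.ofPred_and, Set.ofPred_forall]
    refine IsClosed.inter ?_ (IsClosed.inter ?_ (IsClosed.inter ?_ (IsClosed.inter ?_ ?_)))
    · exact isClosed_iInter fun j => (isClosed_le (by fun_prop) (by fun_prop)).inter
        (isClosed_le (by fun_prop) (by fun_prop))
    · exact isClosed_iInter fun j => isClosed_iInter fun _ =>
        isClosed_eq (by fun_prop) (by fun_prop)
    · exact isClosed_iInter fun j => isClosed_iInter fun _ =>
        isClosed_le (by fun_prop) (by fun_prop)
    · exact isClosed_le (by fun_prop) (by fun_prop)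
    · exact isClosed_le (by fun_prop) (by fun_prop)
  have hfin : {x | x ∈ PP T c M l u ∧ ∀ j, x j = 0 ∨ x j = 1}.Finite := by
    refine (Set.Finite.pi' (t := fun _ : J => ({0, 1} : Set ℝ)) fun _ => by simp).subset ?_
    intro x hx j
    simpa using hx.2 j
  intro x hx
  rw [← closure_convexHull_extremePoints hcomp hconv] at hx
  refine closure_minimal (convexHull_mono ?_) (hfin.isClosed_convexHull ℝ) hx
  intro y hy
  exact ⟨hy.1, ext_aux T c M l u y hy⟩

lemma cls_aux (n m : ℕ) (S : Fin m → Finset (Fin n)) (hdist : Function.Injective S)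
    (hci : ClosedInter n m S) (δ : Fin m → ℝ) (hδ : ∀ i, δ i = 0 ∨ δ i = 1) :
    ∃ (T : Set (Fin n)) (c : Fin n → Option (Fin m)) (M : Set (Option (Fin m))),
      ∀ z : Fin n → ℝ, (∀ j, z j = 0 ∨ z j = 1) →
        ((∀ i, δ i = ∏ j ∈ S i, (1 - z j)) ↔
          (∀ j ∈ T, z j = 0) ∧ ∀ r ∈ M, 1 ≤ ∑ j with c j = r, z j) := by
  classical
  let T : Set (Fin n) := {j | ∃ i, δ i = 1 ∧ j ∈ S i}
  let Mn : Fin m → Prop := fun i => δ i = 0 ∧ ∀ i', δ i' = 0 → S i' ⊆ S i → i' = i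
  have huniq : ∀ i i' j, Mn i → Mn i' → j ∈ S i → j ∈ S i' → j ∉ T → i = i' := by
    intro i i' j hi hi' hj hj' hT
    obtain ⟨k, hk⟩ := hci i i' ⟨j, by simp [hj, hj']⟩
    have hk0 : δ k = 0 := by
      rcases hδ k with h | h
      · exact h
      · exact absurd ⟨k, h, by rw [← hk]; simp [hj, hj']⟩ hT
    have h1 := hi.2 k hk0 (by rw [← hk]; exact Finset.inter_subset_left)
    have h2 := hi'.2 k hk0 (by rw [← hk]; exact Finset.inter_subset_right)
    exact h1.symm.trans h2
  have hex : ∀ N i, (S i).card = N → δ i = 0 → ∃ i', Mn i' ∧ S i' ⊆ S i := by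
    intro N
    induction N using Nat.strong_induction_on with
    | _ N ih =>
      intro i hN hi
      by_cases h : Mn i
      · exact ⟨i, h, subset_rfl⟩
      · have : ∃ i', δ i' = 0 ∧ S i' ⊆ S i ∧ i' ≠ i := by
          by_contra hcon
          push Not at hcon
          exact h ⟨hi, hcon⟩
        obtain ⟨i', h0, hs, hne⟩ := this
        have hss : S i' ⊂ S i := hs.ssubset_of_ne fun h => hne (hdist h)
        obtain ⟨i₂, h2, h3⟩ := ih _ (hN ▸ Finset.card_lt_card hss) i' rfl h0
        exact ⟨i₂, h2, h3.trans hs⟩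
  let c : Fin n → Option (Fin m) := fun j =>
    if h : ∃ i, Mn i ∧ j ∈ S i ∧ j ∉ T then some h.choose else none
  have hc : ∀ i j, Mn i → (c j = some i ↔ j ∈ S i ∧ j ∉ T) := by
    intro i j hi
    simp only [c]
    split_ifs with h
    · have hs := h.choose_spec
      constructor
      · intro h'
        have h' := Option.some.inj h'
        rw [h'] at hs
        exact hs.2
      · intro h'
        rw [huniq _ _ j hs.1 hi hs.2.1 h'.1 h'.2]
    · constructor
      · intro h'; cases h'
      · intro h'; exact absurd ⟨i, hi, h'⟩ h
  refine ⟨T, c, {r | ∃ i, Mn i ∧ r = some i}, fun z hz => ⟨fun h => ?_, fun h => ?_⟩⟩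
  · have hT : ∀ j ∈ T, z j = 0 := by
      rintro j ⟨i, hi, hj⟩
      rcases hz j with h0 | h1
      · exact h0
      · have := h i
        rw [Finset.prod_eq_zero hj (by rw [h1, sub_self]), hi] at this
        norm_num at this
    refine ⟨hT, ?_⟩
    rintro r ⟨i, hi, rfl⟩
    have := h i
    rw [hi.1] at this
    obtain ⟨j, hj, hj0⟩ := Finset.prod_eq_zero_iff.1 this.symm
    have hj1 : z j = 1 := by linarith
    have hjT : j ∉ T := fun h' => by have := hT j h'; linarith
    rw [← hj1]
    refine Finset.single_le_sum (f := z) (fun i _ => ?_) ?_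
    · rcases hz i with h | h <;> simp [h]
    · simp [hc i j hi, hj, hjT]
  · obtain ⟨hT, hM⟩ := h
    intro i
    rcases hδ i with hi | hi
    · obtain ⟨i', hi', hs⟩ := hex _ i rfl hi
      have h1 := hM (some i') ⟨i', hi', rfl⟩
      obtain ⟨j, hj, hj0⟩ := Finset.exists_ne_zero_of_sum_ne_zero
        (s := univ.filter fun j => c j = some i') (f := z) (by linarith)
      have hj1 := (hz j).resolve_left hj0
      have := (hc i' j hi').1 (by simpa using hj)
      rw [hi, Finset.prod_eq_zero (hs this.1) (by rw [hj1, sub_self])]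
    · rw [hi, Finset.prod_eq_one]
      intro j hj
      rw [hT j ⟨i, hi, hj⟩, sub_zero]

lemma ext_hull (n m l u : ℕ) (S : Fin m → Finset (Fin n)) (D : Finset (Fin m → ℝ))
    (hD : Dset n m l u S ⊆ D) (T : {x // x ∈ D} → Set (Fin n))
    (c : {x // x ∈ D} → Fin n → Option (Fin m)) (M : {x // x ∈ D} → Set (Option (Fin m)))
    (hT : ∀ k, ∀ z : Fin n → ℝ, (∀ j, z j = 0 ∨ z j = 1) →
        ((∀ i, k.1 i = ∏ j ∈ S i, (1 - z j)) ↔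
          (∀ j ∈ T k, z j = 0) ∧ ∀ r ∈ M k, 1 ≤ ∑ j with c k j = r, z j))
    (q : (Fin n → ℝ) × (Fin m → ℝ)) (hq : q ∈ convexHull ℝ (Xset n m l u S)) :
    ∃ (t : {x // x ∈ D} → ℝ) (x : {x // x ∈ D} → Fin n → ℝ), ∑ k, t k = 1 ∧
      (∑ k, t k • (k : Fin m → ℝ)) = q.2 ∧ (∀ j, ∑ k, x k j = q.1 j) ∧
      (∀ k, 0 ≤ t k) ∧ (∀ k j, 0 ≤ x k j ∧ x k j ≤ t k) ∧ (∀ k, ∀ j ∈ T k, x k j = 0) ∧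
      (∀ k, ∀ r ∈ M k, t k ≤ ∑ j with c k j = r, x k j) ∧
      ∀ k, t k * l ≤ ∑ j, x k j ∧ ∑ j, x k j ≤ t k * u := by
  classical
  obtain ⟨ι, _, w, p, hw, hw1, hp, hwp⟩ := mem_convexHull_iff_exists_fintype.1 hq
  let g : ι → {x // x ∈ D} := fun i => ⟨(p i).2, hD ⟨p i, hp i, rfl⟩⟩
  have hcl : ∀ i, (∀ j ∈ T (g i), (p i).1 j = 0) ∧
      ∀ r ∈ M (g i), 1 ≤ ∑ j with c (g i) j = r, (p i).1 j := fun i =>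
    (hT (g i) (p i).1 (hp i).1).1 (hp i).2.2.1
  have h01 : ∀ i j, 0 ≤ (p i).1 j ∧ (p i).1 j ≤ 1 := by
    intro i j
    rcases (hp i).1 j with h | h <;> simp [h]
  refine ⟨fun k => ∑ i with g i = k, w i, fun k j => ∑ i with g i = k, w i * (p i).1 j,
    ?_, ?_, ?_, ?_, ?_, ?_, ?_, ?_⟩
  · rw [Finset.sum_fiberwise, hw1]
  · rw [← hwp, Prod.snd_sum, ← Finset.sum_fiberwise univ g]
    refine Finset.sum_congr rfl fun k _ => ?_
    rw [Finset.sum_smul]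
    refine Finset.sum_congr rfl fun i hi => ?_
    rw [← (Finset.mem_filter.1 hi).2]
    rfl
  · intro j
    rw [Finset.sum_fiberwise, ← hwp, Prod.fst_sum, Finset.sum_apply]
    rfl
  · intro k
    exact Finset.sum_nonneg fun i _ => hw i
  · intro k j
    exact ⟨Finset.sum_nonneg fun i _ => mul_nonneg (hw i) (h01 i j).1,
      Finset.sum_le_sum fun i _ => mul_le_of_le_one_right (hw i) (h01 i j).2⟩
  · intro k j hj
    refine Finset.sum_eq_zero fun i hi => ?_
    have := (Finset.mem_filter.1 hi).2
    subst this
    rw [(hcl i).1 j hj, mul_zero]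
  · intro k r hr
    rw [Finset.sum_comm]
    refine Finset.sum_le_sum fun i hi => ?_
    have := (Finset.mem_filter.1 hi).2
    subst this
    rw [← Finset.mul_sum]
    exact le_mul_of_one_le_right (hw i) ((hcl i).2 r hr)
  · intro k
    rw [Finset.sum_comm, Finset.sum_mul, Finset.sum_mul]
    constructor <;> refine Finset.sum_le_sum fun i _ => ?_ <;> rw [← Finset.mul_sum]
    · exact mul_le_mul_of_nonneg_left (hp i).2.2.2.1 (hw i)
    · exact mul_le_mul_of_nonneg_left (hp i).2.2.2.2 (hw i)
lemma flow_aux {V : Type*} [Fintype V] (f : V → V → ℝ) (τ : V → ℝ) (hτ : ∀ v, 0 ≤ τ v ∧ τ v ≤ 1) :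
    ∃ e : V → V → ℝ, (∀ v w, e v w ∈ Set.uIcc 0 (f v w)) ∧
      (∀ v, 0 ≤ ∑ w, f v w - ∑ w, f w v →
        ∑ w, e v w - ∑ w, e w v = τ v * (∑ w, f v w - ∑ w, f w v)) ∧
      (∀ v, ∑ w, f v w - ∑ w, f w v ≤ 0 →
        ∑ w, f v w - ∑ w, f w v ≤ ∑ w, e v w - ∑ w, e w v ∧
        ∑ w, e v w - ∑ w, e w v ≤ 0) := by
  classical
  set a : V → V → ℝ := fun v w => (f v w)⁻ + (f w v)⁺ with ha
  have ha0 : ∀ v w, 0 ≤ a v w := fun v w => add_nonneg (negPart_nonneg _) (posPart_nonneg _)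
  set b : V → ℝ := fun v => ∑ w, f v w - ∑ w, f w v with hb
  have hba : ∀ v, b v = ∑ w, a w v - ∑ w, a v w := by
    intro v
    simp only [hb, ha, ← Finset.sum_sub_distrib]
    refine Finset.sum_congr rfl fun w _ => ?_
    have h1 := posPart_sub_negPart (f v w)
    have h2 := posPart_sub_negPart (f w v)
    linarith
  have key : ∃ θ : V → ℝ, (∀ v, 0 ≤ θ v ∧ θ v ≤ 1) ∧
      ∀ v, θ v * (∑ w, a v w + (b v)⁺) = ∑ w, a v w * θ w + τ v * (b v)⁺ := by
    let F0 : (V → Set.Icc (0:ℝ) 1) → V → ℝ := fun θ v =>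
      (∑ w, a v w * (θ w : ℝ) + τ v * (b v)⁺) / (∑ w, a v w + (b v)⁺)
    have hden : ∀ v, 0 ≤ ∑ w, a v w + (b v)⁺ := fun v =>
      add_nonneg (Finset.sum_nonneg fun w _ => ha0 v w) (posPart_nonneg _)
    have hnum : ∀ (θ : V → Set.Icc (0:ℝ) 1) v, 0 ≤ ∑ w, a v w * (θ w : ℝ) + τ v * (b v)⁺ :=
      fun θ v => add_nonneg (Finset.sum_nonneg fun w _ => mul_nonneg (ha0 v w) (θ w).2.1)
        (mul_nonneg (hτ v).1 (posPart_nonneg _))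
    have hle : ∀ (θ : V → Set.Icc (0:ℝ) 1) v, ∑ w, a v w * (θ w : ℝ) + τ v * (b v)⁺
        ≤ ∑ w, a v w + (b v)⁺ := by
      intro θ v
      refine add_le_add (Finset.sum_le_sum fun w _ => ?_) ?_
      · exact mul_le_of_le_one_right (ha0 v w) (θ w).2.2
      · exact mul_le_of_le_one_left (posPart_nonneg _) (hτ v).2
    have hF : ∀ θ v, F0 θ v ∈ Set.Icc (0:ℝ) 1 := fun θ v =>
      ⟨div_nonneg (hnum θ v) (hden v), div_le_one_of_le₀ (hle θ v) (hden v)⟩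
    let F : (V → Set.Icc (0:ℝ) 1) →o (V → Set.Icc (0:ℝ) 1) :=
      { toFun := fun θ v => ⟨F0 θ v, hF θ v⟩
        monotone' := by
          intro θ θ' h v
          refine Subtype.mk_le_mk.2 ?_
          refine div_le_div_of_nonneg_right ?_ (hden v)
          refine add_le_add (Finset.sum_le_sum fun w _ => ?_) le_rfl
          exact mul_le_mul_of_nonneg_left (h w) (ha0 v w) }
    have : Fact ((0:ℝ) ≤ 1) := ⟨zero_le_one⟩
    let θ := OrderHom.lfp F
    have hfix : F θ = θ := OrderHom.map_lfp F
    refine ⟨fun v => θ v, fun v => (θ v).2, fun v => ?_⟩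
    have h1 : F0 θ v = θ v := congrArg Subtype.val (congrFun hfix v)
    rcases (hden v).eq_or_lt with h0 | h0
    · have := hle θ v
      have := hnum θ v
      rw [← h0, mul_zero]
      linarith
    · change (θ v : ℝ) * _ = _
      rw [← h1]
      exact div_mul_cancel₀ _ h0.ne'
  obtain ⟨θ, hθ, hfix⟩ := key
  refine ⟨fun v w => θ v * (f v w)⁺ - θ w * (f v w)⁻, ?_, ?_⟩
  · intro v w
    change θ v * (f v w)⁺ - θ w * (f v w)⁻ ∈ _
    rcases le_total 0 (f v w) with h | h
    · rw [Set.uIcc_of_le h, posPart_of_nonneg h, negPart_of_nonneg h]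
      constructor <;> nlinarith [hθ v]
    · rw [Set.uIcc_of_ge h, posPart_of_nonpos h, negPart_of_nonpos h]
      constructor <;> nlinarith [hθ w]
  · have hdiv : ∀ v, ∑ w, (θ v * (f v w)⁺ - θ w * (f v w)⁻) -
        ∑ w, (θ w * (f w v)⁺ - θ v * (f w v)⁻) = θ v * ∑ w, a w v - ∑ w, a v w * θ w := by
      intro v
      rw [Finset.mul_sum, ← Finset.sum_sub_distrib, ← Finset.sum_sub_distrib]
      refine Finset.sum_congr rfl fun w _ => ?_
      simp only [ha]; ring
    constructor
    · intro v h
      change 0 ≤ b v at h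
      have := hfix v
      rw [posPart_of_nonneg h] at this
      rw [hdiv]
      change _ = τ v * b v
      have h2 := hba v
      linear_combination this - θ v * h2
    · intro v h
      change b v ≤ 0 at h
      have := hfix v
      rw [posPart_of_nonpos h] at this
      rw [hdiv]
      change b v ≤ _ ∧ _
      have h2 := hba v
      have : θ v * ∑ w, a w v - ∑ w, a v w * θ w = θ v * b v := by
        linear_combination this - θ v * h2
      rw [this]
      constructor <;> nlinarith [hθ v]

lemma link_aux {K J R : Type*} [Fintype K] [Fintype J] [Fintype R] [DecidableEq K] [DecidableEq R]
    (x y : K → J → ℝ) (hs : ∀ j, ∑ k, x k j = ∑ k, y k j) (c : K → J → R) (L U : K → ℝ)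
    (hLU : ∀ k, L k ≤ U k) (hx : ∀ k, ∑ j, x k j ≤ U k) (hy : ∀ k, L k ≤ ∑ j, y k j) :
    ∃ w : K → J → ℝ, (∀ k j, w k j ∈ Set.uIcc (x k j) (y k j)) ∧
      (∀ k r, ∑ j with c k j = r, w k j ∈
        Set.uIcc (∑ j with c k j = r, x k j) (∑ j with c k j = r, y k j)) ∧
      (∀ j, ∑ k, w k j = ∑ k, x k j) ∧
      ∀ k, L k ≤ ∑ j, w k j ∧ ∑ j, w k j ≤ U k := by
  classical
  let d : K → J → ℝ := fun k j => y k j - x k j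
  let f : (K ⊕ (K × R) ⊕ J) → (K ⊕ (K × R) ⊕ J) → ℝ := fun v w =>
    match v, w with
    | .inl k, .inr (.inl p) => if k = p.1 then ∑ j with c k j = p.2, d k j else 0
    | .inr (.inl p), .inr (.inr j) => if c p.1 j = p.2 then d p.1 j else 0
    | _, _ => 0
  let τ : (K ⊕ (K × R) ⊕ J) → ℝ := fun v =>
    match v with
    | .inl k => if L k ≤ ∑ j, x k j then 0 else (L k - ∑ j, x k j) / ∑ j, d k j
    | _ => 0
  have hd : ∀ k, ∑ j, d k j = ∑ j, y k j - ∑ j, x k j := fun k => Finset.sum_sub_distrib ..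
  have hτ : ∀ v, 0 ≤ τ v ∧ τ v ≤ 1 := by
    rintro (k | p | j)
    · simp only [τ]
      split_ifs with h
      · simp
      · push Not at h
        have h1 := hd k
        have h2 := hy k
        have h3 : 0 < ∑ j, d k j := by linarith
        exact ⟨div_nonneg (by linarith) h3.le, (div_le_one h3).2 (by linarith)⟩
    · simp [τ]
    · simp [τ]
  obtain ⟨e, he, hpos, hneg⟩ := flow_aux f τ hτ
  have hz : ∀ v w, f v w = 0 → e v w = 0 := by
    intro v w h
    have := he v w
    rw [h] at this
    simpa using this
  have fib : ∀ k, ∑ r, ∑ j with c k j = r, d k j = ∑ j, d k j := fun k =>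
    Finset.sum_fiberwise _ _ _
  -- the three divergence identities
  have e1 : ∀ k, ∑ w, e (.inl k) w - ∑ w, e w (.inl k) = ∑ r, e (.inl k) (.inr (.inl (k, r))) := by
    intro k
    rw [Finset.sum_eq_zero (s := univ) (f := fun w => e w (.inl k)), sub_zero]
    · rw [Fintype.sum_sum_type, Fintype.sum_sum_type, Fintype.sum_prod_type]
      rw [Finset.sum_eq_zero (fun i _ => hz _ _ rfl), 
        Finset.sum_eq_zero (s := (univ : Finset J)) (fun i _ => hz _ _ rfl), zero_add, add_zero]
      rw [Finset.sum_eq_single k]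
      · intro k' _ hk
        exact Finset.sum_eq_zero fun r _ => hz _ _ (if_neg hk.symm)
      · simp
    · rintro (_ | _ | _) _ <;> exact hz _ _ rfl
  have f1 : ∀ k, ∑ w, f (.inl k) w - ∑ w, f w (.inl k) = ∑ j, d k j := by
    intro k
    simp [f, Fintype.sum_sum_type, Fintype.sum_prod_type, ← fib]
  have e2 : ∀ k r, ∑ w, e (.inr (.inl (k, r))) w - ∑ w, e w (.inr (.inl (k, r))) =
      ∑ j with c k j = r, e (.inr (.inl (k, r))) (.inr (.inr j)) -
        e (.inl k) (.inr (.inl (k, r))) := by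
    intro k r
    rw [Fintype.sum_sum_type, Fintype.sum_sum_type, Fintype.sum_sum_type, Fintype.sum_sum_type]
    rw [Finset.sum_eq_zero (s := (univ : Finset K)) (f := fun i => e (.inr (.inl (k, r))) (.inl i))
        (fun i _ => hz _ _ rfl),
      Finset.sum_eq_zero (s := (univ : Finset (K × R)))
        (f := fun i => e (.inr (.inl (k, r))) (.inr (.inl i))) (fun i _ => hz _ _ rfl),
      Finset.sum_eq_zero (s := (univ : Finset (K × R)))
        (f := fun i => e (.inr (.inl i)) (.inr (.inl (k, r)))) (fun i _ => hz _ _ rfl),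
      Finset.sum_eq_zero (s := (univ : Finset J))
        (f := fun i => e (.inr (.inr i)) (.inr (.inl (k, r)))) (fun i _ => hz _ _ rfl)]
    simp only [zero_add, add_zero]
    congr 1
    · rw [Finset.sum_filter]
      refine Finset.sum_congr rfl fun j _ => ?_
      split_ifs with h
      · rfl
      · exact hz _ _ (if_neg h)
    · rw [Finset.sum_eq_single k]
      · intro k' _ hk
        exact hz _ _ (if_neg hk)
      · simp
  have f2 : ∀ k r, ∑ w, f (.inr (.inl (k, r))) w - ∑ w, f w (.inr (.inl (k, r))) = 0 := by
    intro k r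
    simp [f, Fintype.sum_sum_type, Finset.sum_filter]
  have e3 : ∀ j, ∑ w, e (.inr (.inr j)) w - ∑ w, e w (.inr (.inr j)) =
      - ∑ k, e (.inr (.inl (k, c k j))) (.inr (.inr j)) := by
    intro j
    rw [Finset.sum_eq_zero (s := univ) (f := fun w => e (.inr (.inr j)) w), zero_sub]
    · rw [Fintype.sum_sum_type, Fintype.sum_sum_type, Fintype.sum_prod_type]
      rw [Finset.sum_eq_zero (s := (univ : Finset K)) (fun i _ => hz _ _ rfl), 
        Finset.sum_eq_zero (s := (univ : Finset J)) (fun i _ => hz _ _ rfl), zero_add, add_zero]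
      congr 1
      refine Finset.sum_congr rfl fun k _ => ?_
      rw [Finset.sum_eq_single (c k j)]
      · intro r _ hr
        exact hz _ _ (if_neg hr.symm)
      · simp
    · rintro (_ | _ | _) _ <;> exact hz _ _ rfl
  have f3 : ∀ j, ∑ w, f (.inr (.inr j)) w - ∑ w, f w (.inr (.inr j)) = 0 := by
    intro j
    simp [f, Fintype.sum_sum_type, Fintype.sum_prod_type, d, hs]
  have g2 : ∀ k r, ∑ j with c k j = r, e (.inr (.inl (k, c k j))) (.inr (.inr j)) =
        e (.inl k) (.inr (.inl (k, r))) := by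
    intro k r
    have := hpos (.inr (.inl (k, r))) (f2 k r).ge
    rw [f2, e2, mul_zero] at this
    rw [← sub_eq_zero, ← this]
    congr 1
    refine Finset.sum_congr rfl fun j hj => ?_
    rw [(Finset.mem_filter.1 hj).2]
  have g3 : ∀ j, ∑ k, e (.inr (.inl (k, c k j))) (.inr (.inr j)) = 0 := by
    intro j
    have := hpos (.inr (.inr j)) (f3 j).ge
    rw [f3, e3, mul_zero] at this
    linarith
  have shift : ∀ a b t : ℝ, t ∈ Set.uIcc 0 (b - a) → a + t ∈ Set.uIcc a b := by
    intro a b t h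
    rw [Set.mem_uIcc] at *
    rcases h with h | h
    · left; constructor <;> linarith
    · right; constructor <;> linarith
  have g1 : ∀ k, ∑ j, e (.inr (.inl (k, c k j))) (.inr (.inr j)) =
      ∑ w, e (.inl k) w - ∑ w, e w (.inl k) := by
    intro k
    rw [e1, ← Finset.sum_fiberwise univ (c k)]
    exact Finset.sum_congr rfl fun r _ => g2 k r
  refine ⟨fun k j => x k j + e (.inr (.inl (k, c k j))) (.inr (.inr j)), ?_, ?_, ?_, ?_⟩
  · intro k j
    apply shift
    have := he (.inr (.inl (k, c k j))) (.inr (.inr j))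
    simpa [f, d] using this
  · intro k r
    rw [Finset.sum_add_distrib, g2]
    apply shift
    have := he (.inl k) (.inr (.inl (k, r)))
    simpa [f, d, Finset.sum_sub_distrib] using this
  · intro j
    rw [Finset.sum_add_distrib, g3, add_zero]
  · intro k
    rw [Finset.sum_add_distrib, g1]
    have h1 := hd k
    have h2 := hx k
    have h3 := hy k
    have h4 := hLU k
    rcases le_total 0 (∑ j, d k j) with h | h
    · have := hpos (.inl k) (by rwa [f1])
      rw [this, f1]
      simp only [τ]
      split_ifs with hL
      · constructor <;> linarith
      · push Not at hL
        rw [div_mul_cancel₀ _ (by linarith)]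
        constructor <;> linarith
    · have := hneg (.inl k) (by rwa [f1])
      rw [f1] at this
      constructor <;> linarith

theorem stmt5 (n m l u : ℕ) (S : Fin m → Finset (Fin n))
    (hn : 0 < n) (hm : 0 < m) (hlu : l ≤ u) (hu : 2 ≤ u)
    (hdist : Function.Injective S)
    (hcard : ∀ i, 1 ≤ (S i).card ∧ (S i).card ≤ n - l)
    (hproper : ProperFam n m l u S)
    (hD : Dset n m l u S = Dset n m 0 n S) :
    convexHull ℝ (Xset n m l u S) =
      convexHull ℝ (Xset n m 0 u S) ∩ convexHull ℝ (Xset n m l n S) := by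
  classical
  have hle : ∀ z : Fin n → ℝ, (∀ j, z j = 0 ∨ z j = 1) → 0 ≤ ∑ j, z j ∧ ∑ j, z j ≤ n := by
    intro z hz
    have h01 : ∀ j, 0 ≤ z j ∧ z j ≤ 1 := fun j => by rcases hz j with h | h <;> simp [h]
    refine ⟨Finset.sum_nonneg fun j _ => (h01 j).1, ?_⟩
    calc ∑ j, z j ≤ ∑ _j : Fin n, (1:ℝ) := Finset.sum_le_sum fun j _ => (h01 j).2
      _ = n := by simp
  have hsub : ∀ l' u', Xset n m l' u' S ⊆ Xset n m 0 n S := by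
    rintro l' u' p ⟨h1, h2, h3, _, _⟩
    exact ⟨h1, h2, h3, by simpa using (hle _ h1).1, (hle _ h1).2⟩
  apply Set.Subset.antisymm
  · refine Set.subset_inter (convexHull_mono ?_) (convexHull_mono ?_)
    · rintro p ⟨h1, h2, h3, h4, h5⟩
      exact ⟨h1, h2, h3, by simpa using (hle _ h1).1, h5⟩
    · rintro p ⟨h1, h2, h3, h4, h5⟩
      exact ⟨h1, h2, h3, h4, (hle _ h1).2⟩
  rintro q ⟨hq1, hq2⟩
  obtain ⟨hci, D, hDD, -, hind⟩ := hproper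
  have hDsub : ∀ l' u', Dset n m l' u' S ⊆ D := by
    intro l' u'
    rw [hDD, hD]
    exact Set.image_mono (hsub l' u')
  have hδ : ∀ k : {x // x ∈ D}, ∀ i, k.1 i = 0 ∨ k.1 i = 1 := by
    intro k
    have : k.1 ∈ Dset n m l u S := by rw [← hDD]; exact k.2
    obtain ⟨p, hp, hpk⟩ := this
    rw [← hpk]
    exact hp.2.1
  choose T c M hT using fun k : {x // x ∈ D} => cls_aux n m S hdist hci k.1 (hδ k)
  obtain ⟨t, x, t1, t2, x1, t0, x2, x3, x4, x5⟩ :=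
    ext_hull n m 0 u S D (hDsub _ _) T c M hT q hq1
  obtain ⟨t', y, t1', t2', y1, t0', y2, y3, y4, y5⟩ :=
    ext_hull n m l n S D (hDsub _ _) T c M hT q hq2
  have htt : t' = t := by
    have h := hind.eq_zero_of_sum_eq_zero (s := univ) (w := t' - t)
      (by simp only [Pi.sub_apply, Finset.sum_sub_distrib]; rw [t1, t1', sub_self])
      (by simp only [Pi.sub_apply, sub_smul, Finset.sum_sub_distrib]
          rw [t2, t2', sub_self])
    funext k
    have := h k (Finset.mem_univ k)
    simpa [sub_eq_zero] using this
  subst htt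
  obtain ⟨w, w1, w2, w3, w4⟩ := link_aux x y (fun j => by rw [x1, y1]) c
    (fun k => t' k * l) (fun k => t' k * u)
    (fun k => mul_le_mul_of_nonneg_left (by exact_mod_cast hlu) (t0 k))
    (fun k => (x5 k).2) (fun k => (y5 k).1)
  have b1 : ∀ k j, 0 ≤ w k j ∧ w k j ≤ t' k := by
    intro k j
    have h1 := x2 k j
    have h2 := y2 k j
    rcases Set.mem_uIcc.1 (w1 k j) with h | h <;> constructor <;> linarith
  have b2 : ∀ k, ∀ j ∈ T k, w k j = 0 := by
    intro k j hj
    have := w1 k j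
    rw [x3 k j hj, y3 k j hj] at this
    simpa using this
  have b3 : ∀ k, ∀ r ∈ M k, t' k ≤ ∑ j with c k j = r, w k j := by
    intro k r hr
    have h1 := x4 k r hr
    have h2 := y4 k r hr
    rcases Set.mem_uIcc.1 (w2 k r) with h | h <;> linarith
  have hfib : ∀ k, 0 < t' k →
      ((t' k)⁻¹ • w k, (k : Fin m → ℝ)) ∈ convexHull ℝ (Xset n m l u S) := by
    intro k hk
    have hmem : (t' k)⁻¹ • w k ∈ PP (T k) (c k) (M k) l u := by
      refine ⟨fun j => ⟨?_, ?_⟩, fun j hj => ?_, fun r hr => ?_, ?_, ?_⟩ <;>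
        simp only [Pi.smul_apply, smul_eq_mul, ← Finset.mul_sum]
      · exact mul_nonneg (inv_nonneg.2 hk.le) (b1 k j).1
      · rw [inv_mul_le_iff₀ hk, mul_one]; exact (b1 k j).2
      · rw [b2 k j hj, mul_zero]
      · rw [le_inv_mul_iff₀ hk, mul_one]; exact b3 k r hr
      · rw [le_inv_mul_iff₀ hk]; exact (w4 k).1
      · rw [inv_mul_le_iff₀ hk]; exact (w4 k).2
    have h := PP_sub _ _ _ _ _ hmem
    have h2 : ((t' k)⁻¹ • w k, (k : Fin m → ℝ)) ∈
        convexHull ℝ ({x | x ∈ PP (T k) (c k) (M k) l u ∧ ∀ j, x j = 0 ∨ x j = 1} ×ˢ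
          ({(k : Fin m → ℝ)} : Set (Fin m → ℝ))) := by
      rw [convexHull_prod, convexHull_singleton]
      exact ⟨h, rfl⟩
    refine convexHull_mono ?_ h2
    rintro ⟨z, d⟩ ⟨⟨⟨p1, p2, p3, p4, p5⟩, hz⟩, hd⟩
    obtain rfl : d = k := hd
    exact ⟨hz, hδ k, (hT k z hz).2 ⟨p2, p3⟩, p4, p5⟩
  have hfin : q = ∑ k, t' k • ((t' k)⁻¹ • w k, (k : Fin m → ℝ)) := by
    refine Prod.ext ?_ ?_
    · rw [Prod.fst_sum]
      funext j
      rw [Finset.sum_apply, ← x1 j, ← w3 j]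
      refine Finset.sum_congr rfl fun k _ => ?_
      change w k j = t' k * ((t' k)⁻¹ * w k j)
      rcases (t0 k).eq_or_lt with h | h
      · have := b1 k j
        rw [← h] at this ⊢
        linarith
      · rw [mul_inv_cancel_left₀ h.ne']
    · rw [Prod.snd_sum, ← t2]
      rfl
  rw [hfin, ← Finset.sum_filter_of_ne (p := fun k => 0 < t' k)]
  · refine (convex_convexHull ℝ _).sum_mem (fun k _ => t0 k) ?_ fun k hk =>
      hfib k (Finset.mem_filter.1 hk).2
    rw [Finset.sum_filter_of_ne, t1]
    intro k _ h
    exact lt_of_le_of_ne (t0 k) h.symm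
  · intro k _ h
    refine lt_of_le_of_ne (t0 k) fun h' => h ?_
    rw [← h', zero_smul]
end
end

section
/- Let β ∈ R^m and γ ∈ R be such that the inequality β·δ ≤ γ (with all z-coefficients zero) is valid for X^{l,u} and defines a facet of conv(X^{l,u}). Then there exists c > 0 such that either the inequality is c·(δ_{i+1} − δ_i) ≤ 0 for some i ∈ {1,…,m−1}, or the inequality is c·(−δ_m) ≤ 0. -/
open Finset

noncomputable section

lemma hull_le {E : Type*} [AddCommGroup E] [Module ℝ E] (P : Set E) (h : E →ₗ[ℝ] ℝ) (c : ℝ)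
    (H : ∀ x ∈ P, h x ≤ c) : ∀ x ∈ convexHull ℝ P, h x ≤ c := by
  intro x hx
  have : convexHull ℝ P ⊆ {x | h x ≤ c} :=
    convexHull_min H (convex_halfSpace_le h.isLinear c)
  exact this hx

lemma codim2 {E : Type*} [AddCommGroup E] [Module ℝ E] [FiniteDimensional ℝ E] (P : Set E)
    (f g1 g2 : E →ₗ[ℝ] ℝ) (γ e1 e2 : ℝ)
    (hf : IsFacet P f γ) (h1 : ∀ x ∈ P, 0 ≤ g1 x) (h2 : ∀ x ∈ P, 0 ≤ g2 x)
    (he1 : 0 < e1) (he2 : 0 < e2)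
    (H1 : ∀ x ∈ P, e1 * g1 x ≤ γ - f x) (H2 : ∀ x ∈ P, e2 * g2 x ≤ γ - f x)
    (p0 p1 p2 : E) (m0 : p0 ∈ P) (m1 : p1 ∈ P) (m2 : p2 ∈ P)
    (a0 : g1 p0 = 0) (a1 : g1 p1 = 1) (a2 : g1 p2 = 0)
    (b0 : g2 p0 = 0) (b1 : g2 p1 = 0) (b2 : g2 p2 = 1) : False := by
  obtain ⟨_, hd⟩ := hf
  set F : Set E := {x ∈ convexHull ℝ P | f x = γ} with hF
  have key : ∀ (g : E →ₗ[ℝ] ℝ) (e : ℝ), 0 < e → (∀ x ∈ P, 0 ≤ g x) →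
      (∀ x ∈ P, e * g x ≤ γ - f x) → ∀ x ∈ F, g x = 0 := by
    intro g e he hg hH x hx
    have A := hull_le P (-g) 0 (fun y hy => by simpa using hg y hy) x hx.1
    have B := hull_le P (e • g + f) γ (fun y hy => by
      have := hH y hy
      simp; linarith) x hx.1
    have C := hx.2
    simp at A B
    have : e * g x ≤ 0 := by linarith
    nlinarith
  have k1 := key g1 e1 he1 h1 H1
  have k2 := key g2 e2 he2 h2 H2
  let V := vectorSpan ℝ P
  let W := vectorSpan ℝ F
  have hWV : W ≤ V := by
    have : affineSpan ℝ F ≤ affineSpan ℝ P := by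
      rw [← affineSpan_convexHull (s := P)]
      exact affineSpan_mono ℝ (fun x hx => hx.1)
    have := AffineSubspace.direction_le this
    simpa [direction_affineSpan] using this
  rw [direction_affineSpan, direction_affineSpan] at hd
  let L : V →ₗ[ℝ] ℝ × ℝ := (g1.prod g2).comp V.subtype
  have hWk : W.comap V.subtype ≤ LinearMap.ker L := by
    intro x hx
    have hx' : (x : E) ∈ W := hx
    have : W ≤ LinearMap.ker (g1.prod g2) := by
      show vectorSpan ℝ F ≤ _
      rw [vectorSpan_def, Submodule.span_le]
      rintro _ ⟨a, ha, b, hb, rfl⟩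
      simp [k1 a ha, k1 b hb, k2 a ha, k2 b hb]
    have := this hx'
    simpa [L] using this
  have hsurj : Function.Surjective L := by
    rintro ⟨s, t⟩
    refine ⟨s • ⟨p1 - p0, vsub_mem_vectorSpan ℝ m1 m0⟩ + t • ⟨p2 - p0, vsub_mem_vectorSpan ℝ m2 m0⟩, ?_⟩
    simp [L, a0, a1, a2, b0, b1, b2]
  have r1 := LinearMap.finrank_range_add_finrank_ker L
  rw [LinearMap.range_eq_top.2 hsurj, finrank_top] at r1
  have r2 := Submodule.finrank_mono hWk
  have r3 : Module.finrank ℝ (W.comap V.subtype) = Module.finrank ℝ W :=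
    (Submodule.comapSubtypeEquivOfLe hWV).finrank_eq
  have r4 : Module.finrank ℝ (ℝ × ℝ) = 2 := by simp
  change Module.finrank ℝ W + 1 = Module.finrank ℝ V at hd
  omega

def ptA (n m : ℕ) (S : Fin m → Finset (Fin n)) (A : Finset (Fin n)) :
    (Fin n → ℝ) × (Fin m → ℝ) :=
  (fun j => if j ∈ A then 1 else 0, fun i => if Disjoint (S i) A then 1 else 0)

lemma ptA_mem (n m l u : ℕ) (S : Fin m → Finset (Fin n)) (A : Finset (Fin n))
    (h1 : l ≤ A.card) (h2 : A.card ≤ u) : ptA n m S A ∈ Xset n m l u S := by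
  have hs : ∑ j, (ptA n m S A).1 j = (A.card : ℝ) := by
    simp [ptA]
  refine ⟨fun j => ?_, fun i => ?_, fun i => ?_, ?_, ?_⟩
  · by_cases h : j ∈ A <;> simp [ptA, h]
  · by_cases h : Disjoint (S i) A <;> simp [ptA, h]
  · by_cases h : Disjoint (S i) A
    · simp only [ptA, h, if_true]
      symm
      apply Finset.prod_eq_one
      intro j hj
      simp [Finset.disjoint_left.1 h hj]
    · simp only [ptA, h, if_false]
      rw [Finset.not_disjoint_iff] at h
      obtain ⟨j, hj, hA⟩ := h
      symm
      exact Finset.prod_eq_zero hj (by simp [hA])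
  · rw [hs]; exact_mod_cast h1
  · rw [hs]; exact_mod_cast h2

def DL (n m : ℕ) (k : ℕ) : ((Fin n → ℝ) × (Fin m → ℝ)) →ₗ[ℝ] ℝ :=
  if h : k < m then (LinearMap.proj (⟨k, h⟩ : Fin m)).comp (LinearMap.snd ℝ _ _) else 0

lemma DL_lt (n m k : ℕ) (h : k < m) (x : (Fin n → ℝ) × (Fin m → ℝ)) :
    DL n m k x = x.2 ⟨k, h⟩ := by simp [DL, h]

lemma DL_ge (n m k : ℕ) (h : ¬ k < m) (x : (Fin n → ℝ) × (Fin m → ℝ)) :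
    DL n m k x = 0 := by simp [DL, h]

lemma abel (b d : ℕ → ℝ) (N : ℕ) : ∑ i ∈ range N, b i * d i =
    ∑ k ∈ range N, (∑ i ∈ range (k+1), b i) * (d k - d (k+1)) + (∑ i ∈ range N, b i) * d N := by
  induction N with
  | zero => simp
  | succ N ih =>
    rw [Finset.sum_range_succ, ih, Finset.sum_range_succ _ N]
    simp only [Finset.sum_range_succ]
    ring

theorem stmt8 (n m l u : ℕ) (S : Fin m → Finset (Fin n))
    (hn : 0 < n) (hm : 0 < m) (hu : 2 ≤ u) (hlu : l < u)
    (hnested : ∀ i j : Fin m, i < j → S i ⊂ S j)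
    (hS1 : 2 ≤ (SS n m S 1).card)
    (hSm : l ≤ n - (SS n m S m).card)
    (β : Fin m → ℝ) (γ : ℝ)
    (hfacet : IsFacet (Xset n m l u S) (fun zd => ∑ i, β i * zd.2 i) γ) :
    ∃ c : ℝ, 0 < c ∧ γ = 0 ∧
      ((∃ i : Fin m, ∃ h : (i : ℕ) + 1 < m,
          β = fun k => if k = (⟨(i : ℕ) + 1, h⟩ : Fin m) then c else if k = i then -c else 0)
        ∨ β = fun k => if k = (⟨m - 1, Nat.sub_lt hm one_pos⟩ : Fin m) then -c else 0) := by
  have e1 : SS n m S 1 = S ⟨0, hm⟩ := by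
    have : 1 ≤ m := hm
    simp [SS, this]
  have em : SS n m S m = S ⟨m - 1, Nat.sub_lt hm one_pos⟩ := by
    have : 1 ≤ m := hm
    simp [SS, this]
  rw [e1] at hS1
  rw [em] at hSm
  set last : Fin m := ⟨m - 1, Nat.sub_lt hm one_pos⟩ with hlast
  have mono : ∀ i j : Fin m, i ≤ j → S i ⊆ S j := by
    intro i j hij
    rcases hij.eq_or_lt with h | h
    · rw [h]
    · exact (hnested i j h).1
  have tolast : ∀ i : Fin m, S i ⊆ S last := fun i => mono i last (by
    rw [Fin.le_def, hlast]; simp; omega)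
  have fromz : ∀ i : Fin m, S ⟨0, hm⟩ ⊆ S i := fun i => mono _ i (by
    rw [Fin.le_def]; simp)
  have hcc : (S last)ᶜ.card = n - (S last).card := by simp [Finset.card_compl]
  obtain ⟨T', hT's, hT'c⟩ := Finset.exists_subset_card_eq (s := (S last)ᶜ) (n := l) (by omega)
  obtain ⟨T, hTs, hTc⟩ := Finset.exists_subset_card_eq (s := (S last)ᶜ) (n := l - 1) (by omega)
  have hT'd : ∀ i, ∀ j ∈ S i, j ∉ T' := fun i j hj hjT => by
    have := hT's hjT
    simp at this
    exact this (tolast i hj)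
  have hTd : ∀ i, ∀ j ∈ S i, j ∉ T := fun i j hj hjT => by
    have := hTs hjT
    simp at this
    exact this (tolast i hj)
  have memT' : ptA n m S T' ∈ Xset n m l u S := ptA_mem _ _ _ _ _ _ (by omega) (by omega)
  have memj : ∀ i, ∀ j ∈ S i, ptA n m S (insert j T) ∈ Xset n m l u S := by
    intro i j hj
    apply ptA_mem <;> rw [Finset.card_insert_of_notMem (hTd i j hj)] <;> omega
  -- the linear functional
  let f : ((Fin n → ℝ) × (Fin m → ℝ)) →ₗ[ℝ] ℝ :=
    ∑ i, β i • (LinearMap.proj i).comp (LinearMap.snd ℝ _ _)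
  have hfx : ∀ x, f x = ∑ i, β i * x.2 i := by
    intro x; simp [f]
  have hff : (fun zd : (Fin n → ℝ) × (Fin m → ℝ) => ∑ i, β i * zd.2 i) = f := by
    funext x; rw [hfx]
  rw [hff] at hfacet
  have hval := hfacet.1
  -- gamma nonneg
  obtain ⟨j1, hj1, j2, hj2, hj12⟩ := Finset.one_lt_card.1 (show 1 < (S ⟨0, hm⟩).card by omega)
  have hz : ∀ x ∈ Xset n m l u S, ∀ j ∈ S ⟨0, hm⟩, x.1 j = 1 → f x = 0 := by
    intro x hx j hj hxj
    rw [hfx]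
    apply Finset.sum_eq_zero
    intro i _
    rw [hx.2.2.1 i, Finset.prod_eq_zero (fromz i hj) (by rw [hxj]; simp)]
    simp
  have hp1 : (ptA n m S (insert j1 T)).1 j1 = 1 := by simp [ptA]
  have hf1 := hz _ (memj _ j1 hj1) j1 hj1 hp1
  have hγ0 : 0 ≤ γ := by
    have := hval _ (memj _ j1 hj1)
    rwa [hf1] at this
  have hγ : γ = 0 := by
    by_contra hne
    have hpos : 0 < γ := lt_of_le_of_ne hγ0 (Ne.symm hne)
    let Z : Fin n → ((Fin n → ℝ) × (Fin m → ℝ)) →ₗ[ℝ] ℝ := fun j =>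
      (LinearMap.proj j).comp (LinearMap.fst ℝ _ _)
    have hZ : ∀ j x, Z j x = x.1 j := fun j x => by simp [Z]
    have nn : ∀ j, ∀ x ∈ Xset n m l u S, 0 ≤ Z j x := by
      intro j x hx
      rw [hZ]
      rcases hx.1 j with h | h <;> rw [h] <;> norm_num
    have HH : ∀ j ∈ S ⟨0, hm⟩, ∀ x ∈ Xset n m l u S, γ * Z j x ≤ γ - f x := by
      intro j hj x hx
      rw [hZ]
      rcases hx.1 j with h | h
      · rw [h]; have := hval x hx; linarith
      · rw [h, hz x hx j hj h]; linarith
    refine codim2 _ f (Z j1) (Z j2) γ γ γ hfacet (nn _) (nn _) hpos hpos (HH _ hj1) (HH _ hj2)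
      (ptA n m S T') (ptA n m S (insert j1 T)) (ptA n m S (insert j2 T)) memT'
      (memj _ _ hj1) (memj _ _ hj2) ?_ ?_ ?_ ?_ ?_ ?_ <;> rw [hZ] <;>
      simp [ptA, hT'd _ _ hj1, hT'd _ _ hj2, hTd _ _ hj1, hTd _ _ hj2, hj12, Ne.symm hj12]
  subst hγ
  -- Abel summation
  let b : ℕ → ℝ := fun k => if h : k < m then β ⟨k, h⟩ else 0
  let w : ℕ → ℝ := fun k => ∑ i ∈ range (k+1), b i
  let g : ℕ → ((Fin n → ℝ) × (Fin m → ℝ)) →ₗ[ℝ] ℝ := fun k => DL n m k - DL n m (k+1)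
  have hgx : ∀ k x, g k x = DL n m k x - DL n m (k+1) x := fun k x => by simp [g]
  have hfg : ∀ x, f x = ∑ k ∈ range m, w k * g k x := by
    intro x
    have := abel b (fun k => DL n m k x) m
    rw [DL_ge n m m (lt_irrefl _)] at this
    rw [mul_zero, add_zero] at this
    simp only [hgx, w]
    rw [← this, hfx, Finset.sum_range]
    apply Finset.sum_congr rfl
    intro i _
    rw [DL_lt n m i i.2]
    simp [b]
  have gnn : ∀ k, ∀ x ∈ Xset n m l u S, 0 ≤ g k x := by
    intro k x hx
    rw [hgx]
    by_cases h : k + 1 < m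
    · have hk : k < m := by omega
      rw [DL_lt _ _ _ h, DL_lt _ _ _ hk]
      rcases hx.2.1 ⟨k, hk⟩ with h0 | h0
      · have h0' := h0
        rw [hx.2.2.1, Finset.prod_eq_zero_iff] at h0'
        obtain ⟨j, hj, hj0⟩ := h0'
        rw [h0, hx.2.2.1 ⟨k+1, h⟩, Finset.prod_eq_zero (mono ⟨k, hk⟩ ⟨k+1, h⟩ (by simp) hj) hj0]
        simp
      · rw [h0]
        rcases hx.2.1 ⟨k+1, h⟩ with h2 | h2 <;> rw [h2] <;> norm_num
    · rw [DL_ge _ _ _ h]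
      by_cases hk : k < m
      · rw [DL_lt _ _ _ hk]
        rcases hx.2.1 ⟨k, hk⟩ with h2 | h2 <;> rw [h2] <;> norm_num
      · rw [DL_ge _ _ _ hk]; simp
  have pts : ∀ k, k < m → ∃ x ∈ Xset n m l u S, ∀ k', g k' x = if k' = k then 1 else 0 := by
    intro k hk
    have : ∃ x ∈ Xset n m l u S, ∀ i : Fin m, x.2 i = if (i : ℕ) ≤ k then 1 else 0 := by
      by_cases h : k + 1 < m
      · obtain ⟨j, hj, hj'⟩ := Finset.exists_of_ssubset (hnested ⟨k, hk⟩ ⟨k+1, h⟩ (by simp))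
        refine ⟨_, memj _ j hj, fun i => ?_⟩
        have : Disjoint (S i) (insert j T) ↔ (i : ℕ) ≤ k := by
          constructor
          · intro hd
            by_contra hik
            have : j ∈ S i := mono ⟨k+1, h⟩ i (by rw [Fin.le_def]; simp; omega) hj
            exact Finset.disjoint_left.1 hd this (by simp)
          · intro hik
            rw [Finset.disjoint_left]
            intro a ha ha'
            rw [Finset.mem_insert] at ha'
            rcases ha' with rfl | ha'
            · exact hj' (mono i ⟨k, hk⟩ hik ha)
            · exact hTd _ _ ha ha'
        simp only [ptA, this]
      · refine ⟨_, memT', fun i => ?_⟩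
        have h1 : Disjoint (S i) T' := Finset.disjoint_left.2 (hT'd i)
        have h2 : (i : ℕ) ≤ k := by omega
        simp [ptA, h1, h2]
    obtain ⟨x, hx, hxi⟩ := this
    refine ⟨x, hx, fun k' => ?_⟩
    have hD : ∀ i, DL n m i x = if i ≤ k then 1 else 0 := by
      intro i
      by_cases h : i < m
      · rw [DL_lt _ _ _ h, hxi]
      · rw [DL_ge _ _ _ h, if_neg (by omega)]
    rw [hgx, hD, hD]
    split_ifs <;> first | omega | norm_num
  have wle : ∀ k, k < m → w k ≤ 0 := by
    intro k hk
    obtain ⟨x, hx, hg⟩ := pts k hk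
    have := hval x hx
    rw [hfg] at this
    simpa [hg, hk] using this
  have hH : ∀ k, k < m → ∀ x ∈ Xset n m l u S, (-w k) * g k x ≤ 0 - f x := by
    intro k hk x hx
    rw [hfg, zero_sub, ← Finset.sum_neg_distrib]
    have := Finset.single_le_sum (s := range m) (f := fun k => -(w k * g k x)) (fun i hi => by
      have h1 := wle i (by simpa using hi)
      have h2 := gnn i x hx
      show 0 ≤ -(w i * g i x)
      nlinarith) (Finset.mem_range.2 hk)
    simpa using this
  have uniq : ∀ k k', k < m → k' < m → k ≠ k' → w k < 0 → w k' < 0 → False := by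
    intro k k' hk hk' hne hw hw'
    obtain ⟨x, hx, hg⟩ := pts k hk
    obtain ⟨x', hx', hg'⟩ := pts k' hk'
    have h0 : ∀ i, g i (ptA n m S (insert j1 T)) = 0 := by
      intro i
      have hD : ∀ i, DL n m i (ptA n m S (insert j1 T)) = 0 := by
        intro i
        by_cases h : i < m
        · rw [DL_lt _ _ _ h]
          have : ¬ Disjoint (S ⟨i, h⟩) (insert j1 T) := by
            rw [Finset.not_disjoint_iff]
            exact ⟨j1, fromz _ hj1, by simp⟩
          simp only [ptA, this, if_false]
        · rw [DL_ge _ _ _ h]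
      rw [hgx, hD, hD, sub_zero]
    refine codim2 _ f (g k) (g k') 0 (-w k) (-w k') hfacet (gnn _) (gnn _) (by linarith)
      (by linarith) (hH k hk) (hH k' hk') _ x x' (memj _ _ hj1) hx hx' (h0 _) ?_ ?_ (h0 _) ?_ ?_ <;>
      simp [hg, hg', hne, hne.symm]
  have ex : ∃ k, k < m ∧ w k < 0 := by
    by_contra hno
    push Not at hno
    have hf0 : ∀ x, f x = 0 := by
      intro x
      rw [hfg]
      apply Finset.sum_eq_zero
      intro k hk
      have hk := Finset.mem_range.1 hk
      rw [le_antisymm (wle k hk) (hno k hk), zero_mul]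
    have hd := hfacet.2
    have : {x ∈ convexHull ℝ (Xset n m l u S) | f x = 0} = convexHull ℝ (Xset n m l u S) := by
      ext x; simp [hf0]
    rw [this, affineSpan_convexHull] at hd
    omega
  obtain ⟨k, hk, hwk⟩ := ex
  have hfk : ∀ x, f x = w k * g k x := by
    intro x
    rw [hfg]
    apply Finset.sum_eq_single_of_mem k (Finset.mem_range.2 hk)
    intro k' hk' hne
    have hk' := Finset.mem_range.1 hk'
    have : w k' = 0 := by
      by_contra h
      exact uniq k k' hk hk' hne.symm hwk (lt_of_le_of_ne (wle k' hk') h)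
    rw [this, zero_mul]
  have hβ : ∀ i, β i = w k * g k (0, Pi.single i 1) := by
    intro i
    rw [← hfk, hfx]
    simp [Pi.single_apply]
  refine ⟨-w k, by linarith, rfl, ?_⟩
  by_cases h : k + 1 < m
  · left
    refine ⟨⟨k, hk⟩, h, ?_⟩
    funext i
    rw [hβ, hgx, DL_lt _ _ _ hk, DL_lt _ _ _ h]
    simp only [Pi.single_apply, Fin.ext_iff]
    split_ifs <;> first | omega | norm_num
  · right
    funext i
    rw [hβ, hgx, DL_lt _ _ _ hk, DL_ge _ _ _ h]
    simp only [Pi.single_apply, Fin.ext_iff, hlast]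
    split_ifs <;> first | omega | norm_num
end
end
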